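/- Let K be a field of characteristic zero and let r_1, ..., r_k be distinct nonzero elements of K. Suppose p = x^{m_0} * prod_{i=1}^k (x - r_i)^{m_i} and q = x^{m_0'} * prod_{i=1}^k (x - r_i)^{m_i'} are polynomials in K[x] with integer exponents m_i >= 1 and m_i' >= 1 for 1 <= i <= k and m_0, m_0' >= 0. If the codegree-j coefficients of p and q are equal for every 1 <= j <= k, then m_i = m_i' for every 1 <= i <= k; if moreover deg p = deg q, then also m_0 = m_0'. (Theorem 1: the multiplicities of the nonzero roots of a monic polynomial with known distinct roots are uniquely determined by its first k proper leading coefficients.) -/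

import Mathlib

open Polynomial Finset

/-!
Reversing `p` discards the factor `X ^ m₀` and leaves `P = ∏ i, (1 - rᵢ X) ^ mᵢ`, whose coefficient
of degree `j` is the codegree-`j` coefficient of `p`. The logarithmic derivative of `P` is minus the
generating function of the weighted power sums `∑ i, mᵢ rᵢ ^ (n + 1)`, and its first `k`
coefficients depend only on `P` modulo `X ^ (k + 1)`. So the coefficients determine these power sums
for `n < k`. As the `rᵢ` are distinct, a Vandermonde system recovers the `mᵢ rᵢ`, hence the `mᵢ` as
elements of the ring, from them.
-/

section LogarithmicDerivative

open scoped PowerSeries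

variable {S A ι : Type*} [CommSemiring S] [CommSemiring A] [Algebra S A] (D : Derivation S A A)

lemma derivation_pow_eq_pow_mul {f g : A} (h : D f = f * g) (n : ℕ) :
    D (f ^ n) = f ^ n * (n * g) := by
  rw [D.leibniz_pow, h]
  cases n with
  | zero => simp
  | succ n =>
    simp only [Nat.add_sub_cancel, pow_succ, smul_eq_mul, nsmul_eq_mul]
    ring

lemma derivation_prod_pow_eq_prod_pow_mul_sum (s : Finset ι) {f g : ι → A} (m : ι → ℕ)
    (h : ∀ i ∈ s, D (f i) = f i * g i) :
    D (∏ i ∈ s, f i ^ m i) = (∏ i ∈ s, f i ^ m i) * ∑ i ∈ s, m i * g i := by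
  induction s using Finset.cons_induction with
  | empty => simp
  | cons a s ha ih =>
    have hfactor := derivation_pow_eq_pow_mul D (h a (mem_cons_self a s)) (m a)
    have hrest := ih fun i hi => h i (mem_cons_of_mem hi)
    simp only [prod_cons, sum_cons, D.leibniz, smul_eq_mul, hfactor, hrest]
    ring

lemma X_pow_dvd_derivative {R : Type*} [CommSemiring R] {k : ℕ} {f : R⟦X⟧}
    (h : PowerSeries.X ^ (k + 1) ∣ f) : PowerSeries.X ^ k ∣ d⁄dX R f := by
  rw [PowerSeries.X_pow_dvd_iff] at h ⊢
  intro n hn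
  rw [PowerSeries.coeff_derivative, h (n + 1) (by lia), zero_mul]

variable {R : Type*} [CommRing R]

lemma derivative_one_sub_C_mul_X (r : R) :
    d⁄dX R (1 - PowerSeries.C r * PowerSeries.X) =
      (1 - PowerSeries.C r * PowerSeries.X) * -PowerSeries.mk fun n => r ^ (n + 1) := by
  ext n
  cases n <;> simp [sub_mul, mul_assoc, pow_succ']

lemma X_pow_dvd_sub_of_derivative_eq_mul {k : ℕ} {F G f g : R⟦X⟧} (hF : d⁄dX R F = F * f)
    (hG : d⁄dX R G = G * g) (hunit : IsUnit F) (h : PowerSeries.X ^ (k + 1) ∣ F - G) :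
    PowerSeries.X ^ k ∣ f - g := by
  have hsub : F * (f - g) = d⁄dX R (F - G) - (F - G) * g := by
    rw [map_sub, hF, hG]
    ring
  rw [← hunit.dvd_mul_left, hsub]
  exact dvd_sub (X_pow_dvd_derivative h) (((pow_dvd_pow _ k.le_succ).trans h).mul_right g)

end LogarithmicDerivative

section ReciprocalProduct

open scoped PowerSeries

variable {R ι : Type*} [CommRing R] [Fintype ι]

/-- The reciprocal polynomial `∏ i, (1 - rᵢ X) ^ mᵢ` of `∏ i, (X - rᵢ) ^ mᵢ`, as a power series so
that it is invertible and has a logarithmic derivative. -/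
noncomputable def reciprocalProduct (r : ι → R) (m : ι → ℕ) : R⟦X⟧ :=
  ∏ i, (1 - PowerSeries.C (r i) * PowerSeries.X) ^ m i

lemma constantCoeff_reciprocalProduct (r : ι → R) (m : ι → ℕ) :
    PowerSeries.constantCoeff (reciprocalProduct r m) = 1 := by
  simp [reciprocalProduct]

lemma derivative_reciprocalProduct (r : ι → R) (m : ι → ℕ) :
    d⁄dX R (reciprocalProduct r m) =
      reciprocalProduct r m * -PowerSeries.mk fun n => ∑ i, m i * r i ^ (n + 1) := by
  rw [reciprocalProduct, derivation_prod_pow_eq_prod_pow_mul_sum _ _ _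
    fun i _ => derivative_one_sub_C_mul_X (r i)]
  congr 1
  ext n
  simp [← nsmul_eq_mul]

lemma sum_mul_pow_eq_of_X_pow_dvd_sub {r : ι → R} {m m' : ι → ℕ} {k n : ℕ}
    (h : PowerSeries.X ^ (k + 1) ∣ reciprocalProduct r m - reciprocalProduct r m') (hn : n < k) :
    ∑ i, m i * r i ^ (n + 1) = ∑ i, m' i * r i ^ (n + 1) := by
  have hunit : IsUnit (reciprocalProduct r m) := by
    simp [PowerSeries.isUnit_iff_constantCoeff, constantCoeff_reciprocalProduct]
  have hdvd := X_pow_dvd_sub_of_derivative_eq_mul (derivative_reciprocalProduct r m)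
    (derivative_reciprocalProduct r m') hunit h
  have hcoeff := PowerSeries.X_pow_dvd_iff.mp hdvd n hn
  simpa [sub_eq_zero, neg_add_eq_zero] using hcoeff

lemma eq_zero_of_forall_sum_mul_pow_eq_zero [IsDomain R] {r v : ι → R}
    (hr : Function.Injective r) (h : ∀ n < Fintype.card ι, ∑ i, v i * r i ^ n = 0) : v = 0 := by
  let e := (Fintype.equivFin ι).symm
  have hv : v ∘ e = 0 := Matrix.eq_zero_of_forall_pow_sum_mul_pow_eq_zero (hr.comp e.injective)
    fun n => (e.sum_comp fun i => v i * r i ^ (n : ℕ)).trans (h n n.isLt)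
  exact funext (e.surjective.forall.mpr (congrFun hv))

lemma natCast_eq_of_X_pow_dvd_reciprocalProduct_sub [IsDomain R] {r : ι → R}
    (hr : Function.Injective r) (hr0 : ∀ i, r i ≠ 0) {m m' : ι → ℕ}
    (h : PowerSeries.X ^ (Fintype.card ι + 1) ∣ reciprocalProduct r m - reciprocalProduct r m')
    (i : ι) : (m i : R) = m' i := by
  have hsum (n : ℕ) (hn : n < Fintype.card ι) :
      ∑ i, (m i - m' i) * r i * r i ^ n = 0 := by
    simpa only [mul_assoc, ← pow_succ', sub_mul, sum_sub_distrib, sub_eq_zero]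
      using sum_mul_pow_eq_of_X_pow_dvd_sub h hn
  have hzero := congrFun (eq_zero_of_forall_sum_mul_pow_eq_zero hr hsum) i
  exact sub_eq_zero.mp ((mul_eq_zero.mp hzero).resolve_right (hr0 i))

end ReciprocalProduct

section Reverse

open scoped PowerSeries

/-- Reversal of coefficients as a monoid homomorphism, so that it commutes with finite products and
powers. -/
noncomputable def reverseHom (R : Type*) [Semiring R] [NoZeroDivisors R] : R[X] →* R[X] where
  toFun := reverse
  map_one' := reverse_C 1
  map_mul' := reverse_mul_of_domain

variable {R ι : Type*} [CommRing R]

lemma reverse_X_sub_C [Nontrivial R] (a : R) : (X - C a).reverse = 1 - C a * X := by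
  have hX : (X : R[X]).reverse = 1 := by
    rw [← one_mul X, reverse_mul_X, ← C_1, reverse_C]
  simpa [sub_eq_add_neg, hX] using reverse_add_C X (-a)

variable [Fintype ι] [IsDomain R] (r : ι → R) (m : ι → ℕ) (m0 : ℕ)

lemma coe_reverse_X_pow_mul_prod :
    ((X ^ m0 * ∏ i, (X - C (r i)) ^ m i).reverse : R⟦X⟧) = reciprocalProduct r m := by
  have hprod : (∏ i, (X - C (r i)) ^ m i).reverse = ∏ i, (1 - C (r i) * X) ^ m i := by
    change reverseHom R _ = _
    simp only [map_prod, map_pow]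
    exact prod_congr rfl fun i _ => congrArg (· ^ m i) (reverse_X_sub_C (r i))
  rw [reverse_X_pow_mul, hprod, ← coeToPowerSeries.ringHom_apply]
  simp [reciprocalProduct]

lemma coeff_reciprocalProduct {p : R[X]} (hp : p = X ^ m0 * ∏ i, (X - C (r i)) ^ m i) {j : ℕ}
    (hj : j ≤ p.natDegree) :
    PowerSeries.coeff j (reciprocalProduct r m) = p.coeff (p.natDegree - j) := by
  rw [← coe_reverse_X_pow_mul_prod r m m0, ← hp, coeff_coe, coeff_reverse, revAt_le hj]

end Reverse

section Degree

variable {R ι : Type*} [CommRing R] [Nontrivial R] [Fintype ι] (r : ι → R)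

lemma natDegree_X_pow_mul_prod (m : ι → ℕ) (m0 : ℕ) :
    (X ^ m0 * ∏ i, (X - C (r i)) ^ m i).natDegree = m0 + ∑ i, m i := by
  have hmonic (i) (_ : i ∈ univ) : ((X - C (r i)) ^ m i).Monic := (monic_X_sub_C (r i)).pow (m i)
  rw [(monic_X_pow m0).natDegree_mul (monic_prod_of_monic _ _ hmonic),
    natDegree_prod_of_monic _ _ hmonic]
  simp [(monic_X_sub_C _).natDegree_pow]

lemma card_le_natDegree_X_pow_mul_prod {m : ι → ℕ} (hm : ∀ i, 1 ≤ m i) (m0 : ℕ) :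
    Fintype.card ι ≤ (X ^ m0 * ∏ i, (X - C (r i)) ^ m i).natDegree := by
  rw [natDegree_X_pow_mul_prod]
  calc Fintype.card ι = ∑ _i : ι, 1 := by simp
    _ ≤ ∑ i, m i := sum_le_sum fun i _ => hm i
    _ ≤ m0 + ∑ i, m i := Nat.le_add_left _ _

end Degree

theorem multiplicities_determined_by_proper_leading_coeffs_general
    {R ι : Type*} [CommRing R] [IsDomain R] [Fintype ι]
    {r : ι → R} (hr : Function.Injective r) (hr0 : ∀ i, r i ≠ 0)
    {m m' : ι → ℕ} {m0 m0' : ℕ} {p q : R[X]}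
    (hp : p = X ^ m0 * ∏ i, (X - C (r i)) ^ m i)
    (hq : q = X ^ m0' * ∏ i, (X - C (r i)) ^ m' i)
    (hpdeg : Fintype.card ι ≤ p.natDegree) (hqdeg : Fintype.card ι ≤ q.natDegree)
    (hcoeff : ∀ j, 1 ≤ j → j ≤ Fintype.card ι →
      p.coeff (p.natDegree - j) = q.coeff (q.natDegree - j)) :
    (∀ i, (m i : R) = m' i) ∧ (p.natDegree = q.natDegree → (m0 : R) = m0') := by
  have hdvd : PowerSeries.X ^ (Fintype.card ι + 1) ∣
      reciprocalProduct r m - reciprocalProduct r m' := by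
    rw [PowerSeries.X_pow_dvd_iff]
    intro j hj
    rw [map_sub, sub_eq_zero]
    rcases j.eq_zero_or_pos with rfl | hpos
    · simp [constantCoeff_reciprocalProduct]
    · rw [coeff_reciprocalProduct r m m0 hp (by lia), coeff_reciprocalProduct r m' m0' hq (by lia),
        hcoeff j hpos (by lia)]
  have hmult := natCast_eq_of_X_pow_dvd_reciprocalProduct_sub hr hr0 hdvd
  refine ⟨hmult, fun hdeg => ?_⟩
  rw [hp, hq, natDegree_X_pow_mul_prod, natDegree_X_pow_mul_prod] at hdeg
  simpa [hmult] using congrArg (Nat.cast : ℕ → R) hdeg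

/-- Theorem 1: a monic polynomial with known distinct nonzero roots is determined
by its first `k` proper leading coefficients. -/
theorem multiplicities_determined_by_proper_leading_coeffs
    {K : Type*} [Field K] [CharZero K] {k : ℕ}
    (r : Fin k → K) (hr : Function.Injective r) (hr0 : ∀ i, r i ≠ 0)
    (m m' : Fin k → ℕ) (hm : ∀ i, 1 ≤ m i) (hm' : ∀ i, 1 ≤ m' i)
    (m0 m0' : ℕ)
    (p q : K[X])
    (hp : p = X ^ m0 * ∏ i, (X - C (r i)) ^ m i)
    (hq : q = X ^ m0' * ∏ i, (X - C (r i)) ^ m' i)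
    (hcoeff : ∀ j, 1 ≤ j → j ≤ k →
      p.coeff (p.natDegree - j) = q.coeff (q.natDegree - j)) :
    (∀ i, m i = m' i) ∧ (p.natDegree = q.natDegree → m0 = m0') := by
  simpa using multiplicities_determined_by_proper_leading_coeffs_general hr hr0 hp hq
    (hp ▸ card_le_natDegree_X_pow_mul_prod r hm m0)
    (hq ▸ card_le_natDegree_X_pow_mul_prod r hm' m0') (by simpa using hcoeff)
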